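/- Let p, q, r be positive real numbers with 1/p = 1/q + 1/r, let a < b be real numbers, and let m, n be positive integers. Then D**(m+n,p,[a,b]) ≤ D**(m,q,[a,b]) · D**(n,r,[a,b]). Consequently, C(m+n,p)/(m+n)! ≥ (C(m,q)/m!) · (C(n,r)/n!). -/

import Mathlib

open Set Polynomial Nat MeasureTheory ENNReal

/-- `fd 0` belongs to `𝒟ⁿ([a,b])`, with `fd k` its `k`-th derivative: `fd k` exists and is
continuous on `[a,b]` for `0 ≤ k ≤ n-1`, and `fd n` is the derivative of `fd (n-1)` on `(a,b)`. -/
def IsDn (n : ℕ) (a b : ℝ) (fd : ℕ → ℝ → ℝ) : Prop :=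
  (∀ k, k + 1 < n → ∀ x ∈ Set.Icc a b, HasDerivWithinAt (fd k) (fd (k + 1) x) (Set.Icc a b) x) ∧
  ContinuousOn (fd (n - 1)) (Set.Icc a b) ∧
  (∀ x ∈ Set.Ioo a b, HasDerivAt (fd (n - 1)) (fd n x) x)

/-- `m_n(f) = inf_{a<t<b} |f^{(n)}(t)|`. -/
noncomputable def mIoo (n : ℕ) (a b : ℝ) (fd : ℕ → ℝ → ℝ) : ℝ :=
  sInf ((fun t => |fd n t|) '' Set.Ioo a b)

/-- `‖f‖_{p,[a,b]}` for `0 < p < ∞`. -/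
noncomputable def Lp (p a b : ℝ) (f : ℝ → ℝ) : ℝ :=
  (∫ t in a..b, |f t| ^ p) ^ (1 / p)

/-- `‖f‖_{∞,[a,b]}`. -/
noncomputable def Lsup (a b : ℝ) (f : ℝ → ℝ) : ℝ :=
  sSup ((fun t => |f t|) '' Set.Icc a b)

/-- `‖f‖_{p,[a,b]}` for `0 < p ≤ ∞`. -/
noncomputable def pnorm (p : ℝ≥0∞) (a b : ℝ) (f : ℝ → ℝ) : ℝ :=
  if p = ⊤ then Lsup a b f else Lp p.toReal a b f

/-- `D**(n,p,[a,b])`, `p` finite. -/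
noncomputable def Dstar (n : ℕ) (p a b : ℝ) : ℝ :=
  sInf { c | ∃ Q : Polynomial ℝ, Q.Monic ∧ Q.natDegree = n ∧ c = Lp p a b (fun x => Q.eval x) }

/-- `D**(n,∞,[a,b])`. -/
noncomputable def DstarInf (n : ℕ) (a b : ℝ) : ℝ :=
  sInf { c | ∃ Q : Polynomial ℝ, Q.Monic ∧ Q.natDegree = n ∧ c = Lsup a b (fun x => Q.eval x) }

/-- `C(n,p)`, `p` finite. -/
noncomputable def Cnp (n : ℕ) (p : ℝ) : ℝ :=
  sSup { c | ∃ fd : ℕ → ℝ → ℝ, IsDn n 0 1 fd ∧ (∃ x ∈ Set.Icc (0:ℝ) 1, fd 0 x ≠ 0) ∧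
    c = mIoo n 0 1 fd / Lp p 0 1 (fd 0) }

/-- `C(n,∞)`. -/
noncomputable def CnpInf (n : ℕ) : ℝ :=
  sSup { c | ∃ fd : ℕ → ℝ → ℝ, IsDn n 0 1 fd ∧ (∃ x ∈ Set.Icc (0:ℝ) 1, fd 0 x ≠ 0) ∧
    c = mIoo n 0 1 fd / Lsup 0 1 (fd 0) }

/-! The first inequality is Hölder's, since a product of monic polynomials is monic. The second is
the first one on `[0,1]`, because `C(n,p) = n! / D**(n,p,[0,1])`. Monic polynomials, whose `n`-th
derivative is `n!`, give `≥`. For `≤`, a function with `|f⁽ⁿ⁾| ≥ μ > 0` dominates a monic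
polynomial: `|Q| ≤ (n!/μ) |f|` on `[a,b]` for some monic `Q` of degree `n`. At `n + 1` given points
the normalised Lagrange interpolant of `f` is such a `Q`, as its leading coefficient is `f⁽ⁿ⁾(ξ)/n!`
by repeated use of Rolle's theorem. The monic polynomials of degree `n` form an affine space of
dimension `n` and each condition `|Q(x)| ≤ w(x)` cuts out a closed convex set, so Helly's theorem
passes from `n + 1` points to the whole interval. The constant `D**` is positive because the `n`-th
finite difference of step `h` of a monic polynomial of degree `n` is `n! hⁿ`, so that `n + 1`
equally spaced values cannot all be small. -/

/-! ### Monic polynomials dominated at every point of a set -/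

theorem helly_theorem_isClosed {ι E : Type*} [Infinite ι] [AddCommGroup E] [Module ℝ E]
    [FiniteDimensional ℝ E] [TopologicalSpace E] {F : ι → Set E}
    (h_convex : ∀ i, Convex ℝ (F i)) (h_closed : ∀ i, IsClosed (F i))
    {s₀ : Finset ι} (h_compact : IsCompact (⋂ i ∈ s₀, F i))
    (h_inter : ∀ I : Finset ι, I.card = Module.finrank ℝ E + 1 → (⋂ i ∈ I, F i).Nonempty) :
    (⋂ i, F i).Nonempty := by
  classical
  have h_fin (J : Finset ι) : (⋂ i ∈ J, F i).Nonempty := by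
    refine Convex.helly_theorem' (𝕜 := ℝ) (fun i _ => h_convex i) fun I _ hI => ?_
    obtain ⟨I', hII', hI'⟩ := Infinite.exists_superset_card_eq I _ hI
    exact (h_inter I' hI').mono (biInter_subset_biInter_left hII')
  refine (h_compact.inter_iInter_nonempty F h_closed fun J => ?_).mono inter_subset_right
  simpa only [Finset.mem_union, iInter_or, iInter_inter_distrib] using h_fin (s₀ ∪ J)

section MonicInterpolate

variable {ι F : Type*} [Fintype ι] [DecidableEq ι] [Field F] {v : ι → F}

/-- The monic polynomial of degree `#ι` with value `u i` at each node `v i`. For injective `v` this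
parametrises the monic polynomials of degree `#ι` affinely by `ι → F`. -/
noncomputable def monicInterpolate (v u : ι → F) : F[X] :=
  Lagrange.nodal Finset.univ v + Lagrange.interpolate Finset.univ v u

theorem degree_interpolate_univ_lt_degree_nodal (hv : Function.Injective v) (u : ι → F) :
    (Lagrange.interpolate Finset.univ v u).degree < (Lagrange.nodal Finset.univ v).degree := by
  simpa only [Lagrange.degree_nodal] using
    Lagrange.degree_interpolate_lt (s := Finset.univ) u hv.injOn

theorem monic_monicInterpolate (hv : Function.Injective v) (u : ι → F) :
    (monicInterpolate v u).Monic :=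
  Lagrange.nodal_monic.add_of_left (degree_interpolate_univ_lt_degree_nodal hv u)

theorem natDegree_monicInterpolate (hv : Function.Injective v) (u : ι → F) :
    (monicInterpolate v u).natDegree = Fintype.card ι := by
  rw [monicInterpolate, natDegree_add_eq_left_of_degree_lt
    (degree_interpolate_univ_lt_degree_nodal hv u), Lagrange.natDegree_nodal, Finset.card_univ]

theorem eval_node_monicInterpolate (hv : Function.Injective v) (u : ι → F) (i : ι) :
    (monicInterpolate v u).eval (v i) = u i := by
  rw [monicInterpolate, eval_add, Lagrange.eval_nodal_at_node (Finset.mem_univ i),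
    Lagrange.eval_interpolate_at_node u hv.injOn (Finset.mem_univ i), zero_add]

theorem monicInterpolate_eval_node (hv : Function.Injective v) {Q : F[X]} (hQ : Q.Monic)
    (hdeg : Q.natDegree = Fintype.card ι) : monicInterpolate v (fun i => Q.eval (v i)) = Q := by
  refine eq_of_degree_sub_lt_of_eval_index_eq Finset.univ hv.injOn ?_ fun i _ =>
    eval_node_monicInterpolate hv _ i
  have hM := monic_monicInterpolate hv fun i => Q.eval (v i)
  have hMdeg : (monicInterpolate v fun i => Q.eval (v i)).degree = Fintype.card ι := by
    rw [degree_eq_natDegree hM.ne_zero, natDegree_monicInterpolate hv]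
  have hQdeg : Q.degree = Fintype.card ι := by rw [degree_eq_natDegree hQ.ne_zero, hdeg]
  rw [Finset.card_univ, ← hMdeg]
  exact degree_sub_lt_left (hMdeg.trans hQdeg.symm) hM.ne_zero
    (hM.leadingCoeff.trans hQ.leadingCoeff.symm)

theorem setOf_abs_eval_monicInterpolate_le (v : ι → ℝ) (x c : ℝ) :
    {u | |(monicInterpolate v u).eval x| ≤ c} =
      ((leval x).comp (Lagrange.interpolate Finset.univ v)) ⁻¹'
        Metric.closedBall (-(Lagrange.nodal Finset.univ v).eval x) c := by
  ext u
  simp [monicInterpolate, Real.dist_eq, add_comm, -Lagrange.interpolate_apply]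

theorem convex_setOf_abs_eval_monicInterpolate_le (v : ι → ℝ) (x c : ℝ) :
    Convex ℝ {u | |(monicInterpolate v u).eval x| ≤ c} := by
  rw [setOf_abs_eval_monicInterpolate_le]
  exact (convex_closedBall _ _).linear_preimage _

theorem isClosed_setOf_abs_eval_monicInterpolate_le (v : ι → ℝ) (x c : ℝ) :
    IsClosed {u | |(monicInterpolate v u).eval x| ≤ c} := by
  rw [setOf_abs_eval_monicInterpolate_le]
  exact Metric.isClosed_closedBall.preimage (LinearMap.continuous_of_finiteDimensional _)

end MonicInterpolate

theorem exists_monic_forall_abs_eval_le_of_finset {n : ℕ} {s : Set ℝ} (hs : s.Infinite) {w : ℝ → ℝ}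
    (H : ∀ I : Finset ℝ, ↑I ⊆ s → I.card = n + 1 →
      ∃ Q : ℝ[X], Q.Monic ∧ Q.natDegree = n ∧ ∀ x ∈ I, |Q.eval x| ≤ w x) :
    ∃ Q : ℝ[X], Q.Monic ∧ Q.natDegree = n ∧ ∀ x ∈ s, |Q.eval x| ≤ w x := by
  have : Infinite s := hs.to_subtype
  let node : Fin n ↪ s := Fin.valEmbedding.trans (Infinite.natEmbedding s)
  let v : Fin n → ℝ := fun i => node i
  have hv : Function.Injective v := Subtype.val_injective.comp node.injective
  let S : s → Set (Fin n → ℝ) := fun x => {u | |(monicInterpolate v u).eval (x : ℝ)| ≤ w x}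
  have hcompact : IsCompact (⋂ x ∈ Finset.univ.map node, S x) := by
    have hbox : (⋂ x ∈ Finset.univ.map node, S x) =
        univ.pi fun i => Metric.closedBall 0 (w (v i)) := by
      ext u
      simp [S, v, eval_node_monicInterpolate hv u]
    rw [hbox]
    exact isCompact_univ_pi fun i => isCompact_closedBall _ _
  obtain ⟨u, hu⟩ : (⋂ x, S x).Nonempty := by
    refine helly_theorem_isClosed (fun x => convex_setOf_abs_eval_monicInterpolate_le v x (w x))
      (fun x => isClosed_setOf_abs_eval_monicInterpolate_le v x (w x)) hcompact fun I hI => ?_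
    rw [Module.finrank_fin_fun] at hI
    obtain ⟨Q, hQ, hdeg, hQI⟩ := H (I.map (Function.Embedding.subtype _)) (by simp) (by simpa)
    refine ⟨fun i => Q.eval (v i), mem_iInter₂.2 fun x hx => ?_⟩
    simpa [S, monicInterpolate_eval_node hv hQ (by simpa using hdeg)] using
      hQI x (Finset.mem_map_of_mem _ hx)
  exact ⟨monicInterpolate v u, monic_monicInterpolate hv u,
    by simpa using natDegree_monicInterpolate hv u, fun x hx => mem_iInter.1 hu ⟨x, hx⟩⟩

/-! ### Rolle's theorem and the leading coefficient of an interpolant -/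

theorem exists_strictMono_hasDerivAt_eq_zero {a b : ℝ} {f f' : ℝ → ℝ}
    (hf : ContinuousOn f (Icc a b)) (hf' : ∀ x ∈ Ioo a b, HasDerivAt f (f' x) x) {k : ℕ}
    {t : Fin (k + 1) → ℝ} (ht : StrictMono t) (ht_mem : ∀ i, t i ∈ Icc a b)
    (ht_zero : ∀ i, f (t i) = 0) :
    ∃ s : Fin k → ℝ, StrictMono s ∧ ∀ i, s i ∈ Ioo a b ∧ f' (s i) = 0 := by
  have rolle (i : Fin k) : ∃ s ∈ Ioo (t i.castSucc) (t i.succ), f' s = 0 :=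
    exists_hasDerivAt_eq_zero (ht i.castSucc_lt_succ)
      (hf.mono (Icc_subset_Icc (ht_mem _).1 (ht_mem _).2)) ((ht_zero _).trans (ht_zero _).symm)
      fun x hx => hf' x (Ioo_subset_Ioo (ht_mem _).1 (ht_mem _).2 hx)
  choose s hs hs_zero using rolle
  refine ⟨s, fun i j hij => ?_,
    fun i => ⟨Ioo_subset_Ioo (ht_mem _).1 (ht_mem _).2 (hs i), hs_zero i⟩⟩
  calc s i < t i.succ := (hs i).2
    _ ≤ t j.castSucc := ht.monotone (Fin.succ_le_castSucc_iff.2 hij)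
    _ < s j := (hs j).1

theorem natDegree_interpolate_le {ι F : Type*} [DecidableEq ι] [Field F] {s : Finset ι} {v : ι → F}
    (hv : InjOn v s) {n : ℕ} (hcard : s.card = n + 1) (u : ι → F) :
    (Lagrange.interpolate s v u).natDegree ≤ n :=
  natDegree_le_of_degree_le <|
    (Lagrange.degree_interpolate_le u hv).trans_eq (by rw [hcard, Nat.add_sub_cancel])

theorem eval_iterate_derivative_of_natDegree_le {R : Type*} [CommSemiring R] {n : ℕ} {P : R[X]}
    (hP : P.natDegree ≤ n) (x : R) : (derivative^[n] P).eval x = n ! * P.coeff n := by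
  have hconst : (derivative^[n] P).natDegree = 0 := by
    have := natDegree_iterate_derivative P n
    lia
  rw [eq_C_of_natDegree_eq_zero hconst, eval_C, coeff_iterate_derivative, zero_add,
    Nat.descFactorial_self, nsmul_eq_mul]

section IsDn

variable {n : ℕ} {a b : ℝ} {fd gd : ℕ → ℝ → ℝ}

theorem IsDn.tail (h : IsDn (n + 2) a b fd) : IsDn (n + 1) a b (fun k => fd (k + 1)) :=
  ⟨fun k hk => h.1 (k + 1) (by lia), h.2⟩

theorem IsDn.continuousOn (h : IsDn (n + 1) a b fd) : ContinuousOn (fd 0) (Icc a b) := by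
  cases n with
  | zero => exact h.2.1
  | succ n => exact fun x hx => (h.1 0 (by lia) x hx).continuousWithinAt

theorem IsDn.hasDerivAt (h : IsDn (n + 1) a b fd) {x : ℝ} (hx : x ∈ Ioo a b) :
    HasDerivAt (fd 0) (fd 1 x) x := by
  cases n with
  | zero => exact h.2.2 x hx
  | succ n => exact (h.1 0 (by lia) x (Ioo_subset_Icc_self hx)).hasDerivAt (Icc_mem_nhds hx.1 hx.2)

theorem IsDn.sub (hf : IsDn n a b fd) (hg : IsDn n a b gd) :
    IsDn n a b (fun k x => fd k x - gd k x) :=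
  ⟨fun k hk x hx => (hf.1 k hk x hx).sub (hg.1 k hk x hx), hf.2.1.sub hg.2.1,
    fun x hx => (hf.2.2 x hx).sub (hg.2.2 x hx)⟩

theorem isDn_iterate_derivative (n : ℕ) (a b : ℝ) (P : ℝ[X]) :
    IsDn (n + 1) a b (fun k x => (derivative^[k] P).eval x) := by
  have hderiv (k : ℕ) (x : ℝ) : HasDerivAt (fun y => (derivative^[k] P).eval y)
      ((derivative^[k + 1] P).eval x) x := by
    rw [Function.iterate_succ_apply']
    exact Polynomial.hasDerivAt _ x
  exact ⟨fun k _ x _ => (hderiv k x).hasDerivWithinAt, Polynomial.continuousOn _,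
    fun x _ => hderiv n x⟩

theorem IsDn.exists_eq_zero (h : IsDn (n + 1) a b fd) {t : Fin (n + 2) → ℝ} (ht : StrictMono t)
    (ht_mem : ∀ i, t i ∈ Icc a b) (ht_zero : ∀ i, fd 0 (t i) = 0) :
    ∃ ξ ∈ Ioo a b, fd (n + 1) ξ = 0 := by
  induction n generalizing fd with
  | zero =>
    obtain ⟨s, -, hs⟩ := exists_strictMono_hasDerivAt_eq_zero h.continuousOn
      (fun _ => h.hasDerivAt) ht ht_mem ht_zero
    exact ⟨s 0, hs 0⟩
  | succ n ih =>
    obtain ⟨s, hs_mono, hs⟩ := exists_strictMono_hasDerivAt_eq_zero h.continuousOn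
      (fun _ => h.hasDerivAt) ht ht_mem ht_zero
    exact ih h.tail hs_mono (fun i => Ioo_subset_Icc_self (hs i).1) fun i => (hs i).2

theorem IsDn.exists_eq_factorial_mul_coeff_interpolate (h : IsDn (n + 1) a b fd) {I : Finset ℝ}
    (hI : ↑I ⊆ Icc a b) (hcard : I.card = n + 2) :
    ∃ ξ ∈ Ioo a b, fd (n + 1) ξ = (n + 1)! * (Lagrange.interpolate I id (fd 0)).coeff (n + 1) := by
  set P := Lagrange.interpolate I id (fd 0)
  have hdeg : P.natDegree ≤ n + 1 :=
    natDegree_interpolate_le (injOn_id _) hcard (fd 0)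
  have hmem (i : Fin (n + 2)) : I.orderEmbOfFin hcard i ∈ I := I.orderEmbOfFin_mem hcard i
  obtain ⟨ξ, hξ, hzero⟩ := (h.sub (isDn_iterate_derivative n a b P)).exists_eq_zero
    (I.orderEmbOfFin hcard).strictMono (fun i => hI (hmem i)) fun i =>
      sub_eq_zero.2 (Lagrange.eval_interpolate_at_node (fd 0) (injOn_id _) (hmem i)).symm
  exact ⟨ξ, hξ, (sub_eq_zero.1 hzero).trans (eval_iterate_derivative_of_natDegree_le hdeg ξ)⟩

theorem IsDn.exists_monic_forall_mem_abs_eval_le (h : IsDn (n + 1) a b fd) {μ : ℝ} (hμ : 0 < μ)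
    (hμ_le : ∀ t ∈ Ioo a b, μ ≤ |fd (n + 1) t|) {I : Finset ℝ} (hI : ↑I ⊆ Icc a b)
    (hcard : I.card = n + 2) :
    ∃ Q : ℝ[X], Q.Monic ∧ Q.natDegree = n + 1 ∧
      ∀ x ∈ I, |Q.eval x| ≤ (n + 1)! / μ * |fd 0 x| := by
  set P := Lagrange.interpolate I id (fd 0)
  obtain ⟨ξ, hξ, hcoeff⟩ := h.exists_eq_factorial_mul_coeff_interpolate hI hcard
  have hμ_coeff : μ ≤ (n + 1)! * |P.coeff (n + 1)| := by
    simpa only [hcoeff, abs_mul, Nat.abs_cast] using hμ_le ξ hξ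
  have hcoeff_ne : P.coeff (n + 1) ≠ 0 := abs_pos.1 <|
    pos_of_mul_pos_right (hμ.trans_le hμ_coeff) (Nat.cast_nonneg _)
  have hdeg : P.natDegree = n + 1 := natDegree_eq_of_le_of_coeff_ne_zero
    (natDegree_interpolate_le (injOn_id _) hcard (fd 0)) hcoeff_ne
  refine ⟨C (P.coeff (n + 1))⁻¹ * P, ?_, ?_, fun x hx => ?_⟩
  · exact monic_C_mul_of_mul_leadingCoeff_eq_one <| by
      rw [leadingCoeff, hdeg, inv_mul_cancel₀ hcoeff_ne]
  · rw [natDegree_C_mul (inv_ne_zero hcoeff_ne), hdeg]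
  · have hPx : P.eval x = fd 0 x := Lagrange.eval_interpolate_at_node (fd 0) (injOn_id _) hx
    rw [eval_mul, eval_C, hPx, abs_mul, abs_inv]
    gcongr
    rw [inv_le_comm₀ (abs_pos.2 hcoeff_ne) (by positivity), inv_div]
    rwa [div_le_iff₀' (by positivity)]

theorem IsDn.exists_monic_forall_abs_eval_le (hab : a < b) (h : IsDn (n + 1) a b fd) {μ : ℝ}
    (hμ : 0 < μ) (hμ_le : ∀ t ∈ Ioo a b, μ ≤ |fd (n + 1) t|) :
    ∃ Q : ℝ[X], Q.Monic ∧ Q.natDegree = n + 1 ∧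
      ∀ x ∈ Icc a b, |Q.eval x| ≤ (n + 1)! / μ * |fd 0 x| :=
  exists_monic_forall_abs_eval_le_of_finset (Icc_infinite hab) fun _ hI hcard =>
    h.exists_monic_forall_mem_abs_eval_le hμ hμ_le hI hcard

end IsDn

/-! ### The functional `Lp` and its lower bound on monic polynomials -/

section Lp

variable {p q r a b c : ℝ} {f g : ℝ → ℝ}

theorem Lp_nonneg (p : ℝ) (hab : a ≤ b) (f : ℝ → ℝ) : 0 ≤ Lp p a b f :=
  Real.rpow_nonneg (intervalIntegral.integral_nonneg hab fun x _ => by positivity) _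

theorem memLp_restrict_Ioc (hf : ContinuousOn f (Icc a b)) (s : ℝ≥0∞) :
    MemLp f s (volume.restrict (Ioc a b)) := by
  obtain ⟨M, hM⟩ := isCompact_Icc.exists_bound_of_continuousOn hf
  refine MemLp.of_bound
    ((hf.mono Ioc_subset_Icc_self).aestronglyMeasurable measurableSet_Ioc) M ?_
  filter_upwards [ae_restrict_mem measurableSet_Ioc] with x hx
  exact hM x (Ioc_subset_Icc_self hx)

theorem ofReal_Lp (hp : 0 < p) (hab : a ≤ b) (hf : ContinuousOn f (Icc a b)) :
    ENNReal.ofReal (Lp p a b f) =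
      eLpNorm f (ENNReal.ofReal p) (volume.restrict (Ioc a b)) := by
  have hmem := memLp_restrict_Ioc hf (ENNReal.ofReal p)
  rw [← ofReal_lpNorm hmem, lpNorm_eq_integral_norm_rpow_toReal (by simpa) ofReal_ne_top hmem.1,
    toReal_ofReal hp.le, _root_.Lp, intervalIntegral.integral_of_le hab, one_div]
  rfl

theorem Lp_mul_le (h : Real.HolderTriple q r p) (hab : a ≤ b) (hf : ContinuousOn f (Icc a b))
    (hg : ContinuousOn g (Icc a b)) :
    Lp p a b (fun x => f x * g x) ≤ Lp q a b f * Lp r a b g := by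
  have : HolderTriple (.ofReal q) (.ofReal r) (.ofReal p) := h.ennrealOfReal
  rw [← ofReal_le_ofReal_iff (mul_nonneg (Lp_nonneg _ hab _) (Lp_nonneg _ hab _)),
    ofReal_mul (Lp_nonneg _ hab _), ofReal_Lp h.pos' hab (hf.fun_mul hg),
    ofReal_Lp h.left_pos hab hf, ofReal_Lp h.right_pos hab hg]
  change eLpNorm (f • g) _ _ ≤ _
  exact eLpNorm_smul_le_mul_eLpNorm (memLp_restrict_Ioc hg 0).1 (memLp_restrict_Ioc hf 0).1

theorem Lp_le_mul_Lp (hp : 0 < p) (hab : a ≤ b) (hc : 0 ≤ c) (hf : ContinuousOn f (Icc a b))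
    (hg : ContinuousOn g (Icc a b)) (hgf : ∀ x ∈ Icc a b, |g x| ≤ c * |f x|) :
    Lp p a b g ≤ c * Lp p a b f := by
  rw [← ofReal_le_ofReal_iff (mul_nonneg hc (Lp_nonneg _ hab _)), ofReal_mul hc,
    ofReal_Lp hp hab hf, ofReal_Lp hp hab hg]
  refine eLpNorm_le_mul_eLpNorm_of_ae_le_mul ?_ _
  filter_upwards [ae_restrict_mem measurableSet_Ioc] with x hx
  exact hgf x (Ioc_subset_Icc_self hx)

end Lp

section LowerBound

theorem sum_neg_one_pow_mul_choose_mul_eval {R : Type*} [CommRing R] [IsDomain R] (Q : R[X])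
    (y : R) {h : R} (hh : h ≠ 0) :
    ∑ k ∈ Finset.range (Q.natDegree + 1),
        (-1) ^ (Q.natDegree - k) * Q.natDegree.choose k * Q.eval (y + k * h) =
      Q.leadingCoeff * Q.natDegree ! * h ^ Q.natDegree := by
  set L : R[X] := C h * X + C y
  have hL : L.natDegree = 1 := natDegree_linear hh
  have hdeg : (Q.comp L).natDegree = Q.natDegree := by rw [natDegree_comp, hL, mul_one]
  have hlead : (Q.comp L).leadingCoeff = Q.leadingCoeff * h ^ Q.natDegree := by
    rw [leadingCoeff_comp (by simp [hL]), leadingCoeff_linear hh]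
  have hdiff := congrFun (fwdDiff_iter_degree_eq_factorial (Q.comp L)) 0
  rw [fwdDiff_iter_eq_sum_shift, hdeg, hlead] at hdiff
  simpa [L, mul_comm h, add_comm _ y, mul_right_comm Q.leadingCoeff] using hdiff

theorem exists_factorial_mul_pow_le_abs_eval {n : ℕ} {Q : ℝ[X]} (hQ : Q.Monic)
    (hdeg : Q.natDegree = n) {h : ℝ} (hh : 0 < h) (y : ℝ) :
    ∃ k ∈ Finset.range (n + 1), n ! * (h / 2) ^ n ≤ |Q.eval (y + k * h)| := by
  by_contra! hsmall
  have hsum := sum_neg_one_pow_mul_choose_mul_eval Q y hh.ne'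
  rw [hdeg, hQ.leadingCoeff, one_mul] at hsum
  have hchoose : ∑ k ∈ Finset.range (n + 1), (n.choose k : ℝ) = 2 ^ n := by
    exact_mod_cast Nat.sum_range_choose n
  refine lt_irrefl (n ! * h ^ n : ℝ) ?_
  calc (n ! * h ^ n : ℝ) = |n ! * h ^ n| := (abs_of_pos (by positivity)).symm
    _ ≤ ∑ k ∈ Finset.range (n + 1), |(-1) ^ (n - k) * n.choose k * Q.eval (y + k * h)| :=
      hsum ▸ Finset.abs_sum_le_sum_abs _ _
    _ = ∑ k ∈ Finset.range (n + 1), n.choose k * |Q.eval (y + k * h)| := by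
      simp only [abs_mul, abs_pow, abs_neg, abs_one, one_pow, one_mul, Nat.abs_cast]
    _ < ∑ k ∈ Finset.range (n + 1), n.choose k * (n ! * (h / 2) ^ n) := by
      refine Finset.sum_lt_sum_of_nonempty Finset.nonempty_range_add_one fun k hk => ?_
      have : 0 < n.choose k := Nat.choose_pos (Finset.mem_range_succ_iff.1 hk)
      gcongr
      exact hsmall k hk
    _ = n ! * h ^ n := by
      rw [← Finset.sum_mul, hchoose, div_pow]
      field_simp

theorem integral_eq_integral_sum_translates {E : Type*} [NormedAddCommGroup E] [NormedSpace ℝ E]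
    {f : ℝ → E} (hf : Continuous f) (a h : ℝ) (N : ℕ) :
    ∫ x in a..a + N * h, f x = ∫ x in 0..h, ∑ k ∈ Finset.range N, f (x + a + k * h) := by
  have hint (u v : ℝ) : IntervalIntegrable f volume u v := hf.intervalIntegrable u v
  calc ∫ x in a..a + N * h, f x
      = ∑ k ∈ Finset.range N, ∫ x in a + k * h..a + (k + 1 : ℕ) * h, f x := by
        rw [intervalIntegral.sum_integral_adjacent_intervals fun _ _ => hint _ _]
        simp
    _ = ∑ k ∈ Finset.range N, ∫ x in 0..h, f (x + a + k * h) := by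
        refine Finset.sum_congr rfl fun k _ => ?_
        simp only [add_assoc, intervalIntegral.integral_comp_add_right]
        congr 1 <;> push_cast <;> ring
    _ = ∫ x in 0..h, ∑ k ∈ Finset.range N, f (x + a + k * h) :=
        (intervalIntegral.integral_finsetSum fun _ _ =>
          (hf.comp (by fun_prop)).intervalIntegrable _ _).symm

theorem exists_pos_forall_monic_le_Lp (n : ℕ) {p a b : ℝ} (hp : 0 < p) (hab : a < b) :
    ∃ δ > 0, ∀ Q : ℝ[X], Q.Monic → Q.natDegree = n → δ ≤ Lp p a b (fun x => Q.eval x) := by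
  set h : ℝ := (b - a) / (n + 1 : ℕ)
  have hh : 0 < h := div_pos (sub_pos.2 hab) (by positivity)
  have hb : a + (n + 1 : ℕ) * h = b := by
    simp only [h]
    field_simp
    ring
  set c : ℝ := n ! * (h / 2) ^ n
  have hc : 0 < c := by positivity
  refine ⟨(h * c ^ p) ^ (1 / p), by positivity, fun Q hQ hdeg => ?_⟩
  have hcont : Continuous fun x => |Q.eval x| ^ p := Q.continuous.abs.rpow_const fun _ => .inr hp.le
  refine Real.rpow_le_rpow (by positivity) ?_ (by positivity)
  calc h * c ^ p = ∫ _ in 0..h, c ^ p := by simp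
    _ ≤ ∫ x in 0..h, ∑ k ∈ Finset.range (n + 1), |Q.eval (x + a + k * h)| ^ p := by
      refine intervalIntegral.integral_mono_on hh.le (by simp)
        (Continuous.intervalIntegrable (continuous_finsetSum _ fun k _ =>
          hcont.comp (g := fun x => |Q.eval x| ^ p) (by fun_prop)) _ _) fun x _ => ?_
      obtain ⟨k, hk, hck⟩ := exists_factorial_mul_pow_le_abs_eval hQ hdeg hh (x + a)
      calc c ^ p ≤ |Q.eval (x + a + k * h)| ^ p :=
          Real.rpow_le_rpow hc.le hck hp.le
        _ ≤ ∑ k ∈ Finset.range (n + 1), |Q.eval (x + a + k * h)| ^ p :=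
          Finset.single_le_sum (f := fun k : ℕ => |Q.eval (x + a + k * h)| ^ p)
            (fun _ _ => by positivity) hk
    _ = ∫ x in a..b, |Q.eval x| ^ p := by rw [← integral_eq_integral_sum_translates hcont, hb]

end LowerBound

/-! ### The extremal constants -/

section Dstar

variable {n : ℕ} {p q r a b : ℝ}

theorem Dstar_le (hab : a ≤ b) {Q : ℝ[X]} (hQ : Q.Monic) (hdeg : Q.natDegree = n) :
    Dstar n p a b ≤ Lp p a b (fun x => Q.eval x) := by
  refine csInf_le ⟨0, ?_⟩ ⟨Q, hQ, hdeg, rfl⟩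
  rintro _ ⟨Q, -, -, rfl⟩
  exact Lp_nonneg p hab _

theorem le_Dstar {c : ℝ}
    (h : ∀ Q : ℝ[X], Q.Monic → Q.natDegree = n → c ≤ Lp p a b (fun x => Q.eval x)) :
    c ≤ Dstar n p a b := by
  refine le_csInf ⟨_, X ^ n, monic_X_pow n, natDegree_X_pow n, rfl⟩ ?_
  rintro _ ⟨Q, hQ, hdeg, rfl⟩
  exact h Q hQ hdeg

theorem Dstar_pos (n : ℕ) (hp : 0 < p) (hab : a < b) : 0 < Dstar n p a b := by
  obtain ⟨δ, hδ, hle⟩ := exists_pos_forall_monic_le_Lp n hp hab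
  exact hδ.trans_le (le_Dstar hle)

theorem Lp_eval_pos (hp : 0 < p) (hab : a < b) {Q : ℝ[X]} (hQ : Q.Monic) :
    0 < Lp p a b (fun x => Q.eval x) :=
  (Dstar_pos _ hp hab).trans_le (Dstar_le hab.le hQ rfl)

theorem Dstar_add_le_mul (h : Real.HolderTriple q r p) (hab : a < b) (m n : ℕ) :
    Dstar (m + n) p a b ≤ Dstar m q a b * Dstar n r a b := by
  have hprod {F G : ℝ[X]} (hF : F.Monic) (hFdeg : F.natDegree = m) (hG : G.Monic)
      (hGdeg : G.natDegree = n) : Dstar (m + n) p a b ≤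
        Lp q a b (fun x => F.eval x) * Lp r a b (fun x => G.eval x) := by
    refine (Dstar_le hab.le (hF.mul hG) (by rw [hF.natDegree_mul hG, hFdeg, hGdeg])).trans ?_
    simpa only [eval_mul] using Lp_mul_le h hab.le F.continuousOn G.continuousOn
  have hD : 0 < Dstar n r a b := Dstar_pos n h.right_pos hab
  rw [← div_le_iff₀ hD]
  refine le_Dstar fun F hF hFdeg => ?_
  have hFpos := Lp_eval_pos h.left_pos hab hF
  rw [div_le_comm₀ hD hFpos]
  refine le_Dstar fun G hG hGdeg => ?_
  rw [div_le_iff₀' hFpos]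
  exact hprod hF hFdeg hG hGdeg

end Dstar

section Cnp

variable {n : ℕ} {p a b : ℝ} {fd : ℕ → ℝ → ℝ}

theorem mIoo_nonneg (n : ℕ) (a b : ℝ) (fd : ℕ → ℝ → ℝ) : 0 ≤ mIoo n a b fd :=
  Real.sInf_nonneg <| forall_mem_image.2 fun _ _ => abs_nonneg _

theorem mIoo_le {t : ℝ} (ht : t ∈ Ioo a b) : mIoo n a b fd ≤ |fd n t| :=
  csInf_le ⟨0, forall_mem_image.2 fun _ _ => abs_nonneg _⟩ (mem_image_of_mem _ ht)

theorem mIoo_iterate_derivative_of_monic (hab : a < b) {Q : ℝ[X]} (hQ : Q.Monic)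
    (hdeg : Q.natDegree = n) : mIoo n a b (fun k x => (derivative^[k] Q).eval x) = n ! := by
  have hconst (x : ℝ) : (derivative^[n] Q).eval x = n ! := by
    rw [eval_iterate_derivative_of_natDegree_le hdeg.le, ← hdeg, hQ.coeff_natDegree, mul_one]
  simp only [mIoo, hconst, Nat.abs_cast, (nonempty_Ioo.2 hab).image_const, csInf_singleton]

theorem IsDn.mIoo_mul_Dstar_le (hp : 0 < p) (hab : a < b) (h : IsDn (n + 1) a b fd) :
    mIoo (n + 1) a b fd * Dstar (n + 1) p a b ≤ (n + 1)! * Lp p a b (fd 0) := by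
  rcases (mIoo_nonneg (n + 1) a b fd).eq_or_lt with hzero | hpos
  · rw [← hzero, zero_mul]
    exact mul_nonneg (Nat.cast_nonneg _) (Lp_nonneg p hab.le _)
  obtain ⟨Q, hQ, hdeg, hle⟩ := h.exists_monic_forall_abs_eval_le hab hpos fun _ => mIoo_le
  rw [← le_div_iff₀' hpos, ← div_mul_eq_mul_div]
  exact (Dstar_le hab.le hQ hdeg).trans
    (Lp_le_mul_Lp hp hab.le (by positivity) h.continuousOn Q.continuousOn hle)

theorem IsDn.mIoo_div_Lp_le (hp : 0 < p) (h : IsDn (n + 1) 0 1 fd) :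
    mIoo (n + 1) 0 1 fd / Lp p 0 1 (fd 0) ≤ (n + 1)! / Dstar (n + 1) p 0 1 := by
  have hD : 0 < Dstar (n + 1) p 0 1 := Dstar_pos _ hp one_pos
  refine div_le_of_le_mul₀ (Lp_nonneg p zero_le_one _) (by positivity) ?_
  rw [div_mul_eq_mul_div, le_div_iff₀ hD]
  exact h.mIoo_mul_Dstar_le hp one_pos

theorem factorial_div_Lp_le_Cnp (hp : 0 < p) {Q : ℝ[X]} (hQ : Q.Monic)
    (hdeg : Q.natDegree = n + 1) :
    (n + 1)! / Lp p 0 1 (fun x => Q.eval x) ≤ Cnp (n + 1) p := by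
  refine le_csSup ⟨(n + 1)! / Dstar (n + 1) p 0 1, ?_⟩
    ⟨fun k x => (derivative^[k] Q).eval x, isDn_iterate_derivative n 0 1 Q, ?_, ?_⟩
  · rintro _ ⟨fd, h, -, rfl⟩
    exact h.mIoo_div_Lp_le hp
  · by_contra! hzero
    exact hQ.ne_zero (eq_zero_of_infinite_isRoot Q ((Icc_infinite one_pos).mono hzero))
  · rw [mIoo_iterate_derivative_of_monic one_pos hQ hdeg]
    rfl

theorem Cnp_eq_factorial_div_Dstar (hp : 0 < p) (hn : 1 ≤ n) :
    Cnp n p = n ! / Dstar n p 0 1 := by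
  obtain ⟨n, rfl⟩ := Nat.exists_eq_add_of_le' hn
  have hD : 0 < Dstar (n + 1) p 0 1 := Dstar_pos _ hp one_pos
  refine le_antisymm (Real.sSup_le ?_ (by positivity)) ?_
  · rintro _ ⟨fd, h, -, rfl⟩
    exact h.mIoo_div_Lp_le hp
  · have hC : 0 < Cnp (n + 1) p :=
      (div_pos (by positivity) (Lp_eval_pos hp one_pos (monic_X_pow (n + 1)))).trans_le
        (factorial_div_Lp_le_Cnp hp (monic_X_pow (n + 1)) (natDegree_X_pow (n + 1)))
    rw [div_le_comm₀ hD hC]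
    refine le_Dstar fun Q hQ hdeg => ?_
    rw [div_le_comm₀ hC (Lp_eval_pos hp one_pos hQ)]
    exact factorial_div_Lp_le_Cnp hp hQ hdeg

theorem Cnp_div_factorial (hp : 0 < p) (hn : 1 ≤ n) :
    Cnp n p / n ! = 1 / Dstar n p 0 1 := by
  rw [Cnp_eq_factorial_div_Dstar hp hn]
  field_simp

end Cnp

/-- If `1/p = 1/q + 1/r` then `D**(m+n,p,[a,b]) ≤ D**(m,q,[a,b]) · D**(n,r,[a,b])`, and
consequently `C(m+n,p)/(m+n)! ≥ (C(m,q)/m!)·(C(n,r)/n!)`. -/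
theorem stmt18 (p q r : ℝ) (hp : 0 < p) (hq : 0 < q) (hr : 0 < r)
    (hpqr : 1 / p = 1 / q + 1 / r) (a b : ℝ) (hab : a < b)
    (m n : ℕ) (hm : 1 ≤ m) (hn : 1 ≤ n) :
    Dstar (m + n) p a b ≤ Dstar m q a b * Dstar n r a b ∧
    Cnp m q / (m ! : ℝ) * (Cnp n r / (n ! : ℝ)) ≤ Cnp (m + n) p / ((m + n)! : ℝ) := by
  have hHolder : Real.HolderTriple q r p := ⟨by simpa only [one_div] using hpqr.symm, hq, hr⟩
  refine ⟨Dstar_add_le_mul hHolder hab m n, ?_⟩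
  rw [Cnp_div_factorial hq hm, Cnp_div_factorial hr hn, Cnp_div_factorial hp (by lia),
    one_div_mul_one_div]
  exact one_div_le_one_div_of_le (Dstar_pos _ hp one_pos) (Dstar_add_le_mul hHolder one_pos m n)
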